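/- Let j, k ∈ {0,1} and let a, d, e, f be integers, and set b := ad − 1. Let G be the group with presentation on generators α₁, β₁, α₂, β₂, m and relations α₁⁻¹mα₁ = m⁻¹, α₂⁻¹mα₂ = m⁻¹, β₁m = mβ₁, β₂m = mβ₂, α₁β₁α₁⁻¹β₁⁻¹ = m^j, α₂β₂α₂⁻¹β₂⁻¹ = m^k, α₁² = α₂^{2a}β₂m^e, β₁ = α₂^{2b}β₂^{d}m^f. Let H be the group with presentation on generators α₁, α₂, m, σ and relations mσ = σm, α₁α₂α₁⁻¹α₂⁻¹ = σ, α₁⁻¹mα₁ = m⁻¹, α₁⁻¹σα₁ = m^{k−2e}σ⁻¹, α₂⁻¹mα₂ = m⁻¹, α₂⁻¹σα₂ = m^{j+2(f−de)}σ⁻¹. Then there is a group isomorphism θ : H → G with θ(α₁) = α₁, θ(α₂) = α₂, θ(m) = m, and θ(σ) = α₁α₂α₁⁻¹α₂⁻¹. -/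

import Mathlib

/-- Generators `α₁`, `β₁`, `α₂`, `β₂`, `m` of the glued group `G`. -/
inductive GlueGen : Type
  | a1 : GlueGen  -- α₁
  | b1 : GlueGen  -- β₁
  | a2 : GlueGen  -- α₂
  | b2 : GlueGen  -- β₂
  | m : GlueGen   -- m

open FreeGroup in
/-- The relators of the presentation (c-odd) of the paper, with `b = ad − 1`:
`α₁⁻¹mα₁ = m⁻¹`, `α₂⁻¹mα₂ = m⁻¹`, `β₁m = mβ₁`, `β₂m = mβ₂`, `α₁β₁α₁⁻¹β₁⁻¹ = m^j`,
`α₂β₂α₂⁻¹β₂⁻¹ = m^k`, `α₁² = α₂^{2a}β₂m^e`, `β₁ = α₂^{2b}β₂^{d}m^f`. -/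
def cOddRels (j k a d e f : ℤ) : Set (FreeGroup GlueGen) :=
  { (of GlueGen.a1)⁻¹ * of GlueGen.m * of GlueGen.a1 * of GlueGen.m,
    (of GlueGen.a2)⁻¹ * of GlueGen.m * of GlueGen.a2 * of GlueGen.m,
    of GlueGen.b1 * of GlueGen.m * (of GlueGen.b1)⁻¹ * (of GlueGen.m)⁻¹,
    of GlueGen.b2 * of GlueGen.m * (of GlueGen.b2)⁻¹ * (of GlueGen.m)⁻¹,
    of GlueGen.a1 * of GlueGen.b1 * (of GlueGen.a1)⁻¹ * (of GlueGen.b1)⁻¹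
      * (of GlueGen.m) ^ (-j),
    of GlueGen.a2 * of GlueGen.b2 * (of GlueGen.a2)⁻¹ * (of GlueGen.b2)⁻¹
      * (of GlueGen.m) ^ (-k),
    (of GlueGen.a1) ^ 2
      * ((of GlueGen.a2) ^ (2 * a) * of GlueGen.b2 * (of GlueGen.m) ^ e)⁻¹,
    of GlueGen.b1
      * ((of GlueGen.a2) ^ (2 * (a * d - 1)) * (of GlueGen.b2) ^ d
          * (of GlueGen.m) ^ f)⁻¹ }

/-- Generators `α₁`, `α₂`, `m`, `σ` of the torus-bundle group `H`. -/
inductive TBGen : Type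
  | a1 : TBGen  -- α₁
  | a2 : TBGen  -- α₂
  | m : TBGen   -- m
  | s : TBGen   -- σ

open FreeGroup in
/-- The relators of the presentation of the fundamental group of the torus bundle
`M((−1, k−2e; 0, −1), (−1, j+2(f−de); 0, −1); (0, 1))`:
`mσ = σm`, `α₁α₂α₁⁻¹α₂⁻¹ = σ`, `α₁⁻¹mα₁ = m⁻¹`, `α₁⁻¹σα₁ = m^{k−2e}σ⁻¹`,
`α₂⁻¹mα₂ = m⁻¹`, `α₂⁻¹σα₂ = m^{j+2(f−de)}σ⁻¹`. -/
def torusBundleRelsOdd (j k d e f : ℤ) : Set (FreeGroup TBGen) :=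
  { of TBGen.m * of TBGen.s * (of TBGen.m)⁻¹ * (of TBGen.s)⁻¹,
    of TBGen.a1 * of TBGen.a2 * (of TBGen.a1)⁻¹ * (of TBGen.a2)⁻¹ * (of TBGen.s)⁻¹,
    (of TBGen.a1)⁻¹ * of TBGen.m * of TBGen.a1 * of TBGen.m,
    (of TBGen.a1)⁻¹ * of TBGen.s * of TBGen.a1
      * ((of TBGen.m) ^ (k - 2 * e) * (of TBGen.s)⁻¹)⁻¹,
    (of TBGen.a2)⁻¹ * of TBGen.m * of TBGen.a2 * of TBGen.m,
    (of TBGen.a2)⁻¹ * of TBGen.s * of TBGen.a2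
      * ((of TBGen.m) ^ (j + 2 * (f - d * e)) * (of TBGen.s)⁻¹)⁻¹ }

/-!
In both groups `α₁` and `α₂` invert `m`, and conjugation by `α₂` and `α₁` multiplies `α₁ ^ 2` and
`α₂ ^ 2` by fixed powers of `m`. Each group is the universal one generated by such data. In `G`, the
gluing relations amount to `β₂ = α₂ ^ (-2a) α₁ ^ 2 m ^ (-e)` and
`β₁ = α₂ ^ (-2) α₁ ^ (2d) m ^ (f - de)`, so the `βᵢ` can be eliminated; the exponent of `m` picked
up under conjugation is additive, which converts `j` and `k` into `j + 2(f - de)` and `k - 2e`. In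
`H`, `σ = ⁅α₁, α₂⁆` can be eliminated, and its conjugation relations become the two conditions on
squares.
-/

open scoped commutatorElement

section Conjugation

variable {Γ : Type*} [Group Γ] {g m b c : Γ} {n p : ℤ}

lemma semiconjBy_self_inv_iff : SemiconjBy g m m⁻¹ ↔ g⁻¹ * m * g * m = 1 := by
  rw [mul_assoc, mul_assoc, inv_mul_eq_one, eq_comm, SemiconjBy, eq_inv_mul_iff_mul_eq]

/-- The element `b` commutes with `m`, and conjugation by `g` multiplies it by `m ^ n`. For fixed
`g` and `m`, the exponent `n` behaves additively in `b`. -/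
structure IsConjShift (g m : Γ) (n : ℤ) (b : Γ) : Prop where
  commute : Commute m b
  semiconjBy : SemiconjBy g b (m ^ n * b)

lemma isConjShift_iff :
    IsConjShift g m n b ↔ b * m * b⁻¹ * m⁻¹ = 1 ∧ g * b * g⁻¹ * b⁻¹ * m ^ (-n) = 1 := by
  rw [mul_inv_eq_one, mul_inv_eq_iff_eq_mul, zpow_neg, mul_inv_eq_one, mul_inv_eq_iff_eq_mul,
    mul_inv_eq_iff_eq_mul]
  exact ⟨fun h ↦ ⟨h.commute.symm.eq, h.semiconjBy.eq⟩, fun h ↦ ⟨Commute.symm h.1, h.2⟩⟩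

namespace IsConjShift

lemma mul (hb : IsConjShift g m n b) (hc : IsConjShift g m p c) :
    IsConjShift g m (n + p) (b * c) where
  commute := hb.commute.mul_right hc.commute
  semiconjBy := by
    have h := hb.semiconjBy.mul_right hc.semiconjBy
    rwa [(hb.commute.zpow_left p).symm.mul_mul_mul_comm, ← zpow_add] at h

lemma zpow (hb : IsConjShift g m n b) (i : ℤ) : IsConjShift g m (n * i) (b ^ i) where
  commute := hb.commute.zpow_right i
  semiconjBy := by
    rw [zpow_mul, ← (hb.commute.zpow_left n).mul_zpow]
    exact hb.semiconjBy.zpow_right i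

lemma inv (hb : IsConjShift g m n b) : IsConjShift g m (-n) b⁻¹ := by
  simpa using hb.zpow (-1)

/-- The two shifts cancel because `g` inverts `m ^ n`. -/
lemma commute_sq (hb : IsConjShift g m n b) (hg : SemiconjBy g m m⁻¹) : Commute (g ^ 2) b := by
  have h : SemiconjBy g (m ^ n * b) b := by
    simpa using (hg.zpow_right n).mul_right hb.semiconjBy
  rw [pow_two]
  exact h.mul_left hb.semiconjBy

end IsConjShift

lemma isConjShift_zpow_self (hg : SemiconjBy g m m⁻¹) (i : ℤ) :
    IsConjShift g m (-2 * i) (m ^ i) where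
  commute := (Commute.refl m).zpow_right i
  semiconjBy := by
    rw [← zpow_add, show -2 * i + i = -i by ring, zpow_neg, ← inv_zpow]
    exact hg.zpow_right i

lemma commute_sq_of_semiconjBy_inv (hg : SemiconjBy g m m⁻¹) : Commute (g ^ 2) m := by
  simpa using (isConjShift_zpow_self hg 1).commute_sq hg

lemma isConjShift_sq (hg : SemiconjBy g m m⁻¹) : IsConjShift g m 0 (g ^ 2) where
  commute := (commute_sq_of_semiconjBy_inv hg).symm
  semiconjBy := by
    rw [zpow_zero, one_mul]
    exact (Commute.refl g).pow_right 2

end Conjugation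

section Commutator

variable {Γ : Type*} [Group Γ] {x y m : Γ}

lemma commute_commutatorElement (hx : SemiconjBy x m m⁻¹) (hy : SemiconjBy y m m⁻¹) :
    Commute m ⁅x, y⁆ := by
  have hx' : SemiconjBy x m⁻¹ m := by simpa using hx.inv_right
  have hy' : SemiconjBy y m⁻¹ m := by simpa using hy.inv_right
  exact Commute.symm (((hx'.mul_left hy).mul_left hx.inv_symm_left).mul_left hy'.inv_symm_left)

lemma conj_commutatorElement_right_iff (hy : SemiconjBy y m m⁻¹) (n : ℤ) :
    y⁻¹ * ⁅x, y⁆ * y = m ^ n * ⁅x, y⁆⁻¹ ↔ SemiconjBy x (y ^ 2) (m ^ (-n) * y ^ 2) := by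
  have hmn : y * m ^ n * y = m ^ (-n) * y ^ 2 := by
    rw [(hy.zpow_right n).eq, inv_zpow', pow_two, mul_assoc]
  calc y⁻¹ * ⁅x, y⁆ * y = m ^ n * ⁅x, y⁆⁻¹
      ↔ y⁻¹ * (x * y ^ 2 * x⁻¹) * y⁻¹ = m ^ n := by
        rw [eq_mul_inv_iff_mul_eq]
        simp [commutatorElement_def, pow_two, mul_assoc]
    _ ↔ x * y ^ 2 * x⁻¹ = m ^ (-n) * y ^ 2 := by
        rw [mul_inv_eq_iff_eq_mul, inv_mul_eq_iff_eq_mul, ← mul_assoc, hmn]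
    _ ↔ SemiconjBy x (y ^ 2) (m ^ (-n) * y ^ 2) := mul_inv_eq_iff_eq_mul

/-- Inversion turns this into `conj_commutatorElement_right_iff` for `⁅y, x⁆`. -/
lemma conj_commutatorElement_left_iff (hx : SemiconjBy x m m⁻¹) (hy : SemiconjBy y m m⁻¹)
    (n : ℤ) :
    x⁻¹ * ⁅x, y⁆ * x = m ^ n * ⁅x, y⁆⁻¹ ↔ SemiconjBy y (x ^ 2) (m ^ n * x ^ 2) := by
  have hcomm : m ^ n * ⁅y, x⁆ = ⁅y, x⁆ * m ^ n :=
    ((commute_commutatorElement hy hx).zpow_left n).eq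
  rw [← neg_neg n, ← conj_commutatorElement_right_iff hx, neg_neg, ← inv_inj,
    commutatorElement_inv, hcomm]
  simp [commutatorElement_inv, mul_assoc]

end Commutator

/-- The elements `x` and `y` invert `m`, and conjugation by `y` and `x` multiplies `x ^ 2` and
`y ^ 2` by `m ^ p` and `m ^ (-q)`. These are the data parametrizing the homomorphisms out of either
group; the sign makes `p` and `q` the exponents in the torus bundle relators. -/
structure IsTwistedPair {Γ : Type*} [Group Γ] (p q : ℤ) (x y m : Γ) : Prop where
  left_inverts : SemiconjBy x m m⁻¹
  right_inverts : SemiconjBy y m m⁻¹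
  sq_left : IsConjShift y m p (x ^ 2)
  sq_right : IsConjShift x m (-q) (y ^ 2)

section Relators

variable {Γ : Type*} [Group Γ] {x y m b₁ b₂ : Γ} {j k a d e f p q : ℤ}

lemma isTwistedPair_iff_commutatorElement :
    IsTwistedPair p q x y m ↔ SemiconjBy x m m⁻¹ ∧ SemiconjBy y m m⁻¹ ∧
      x⁻¹ * ⁅x, y⁆ * x = m ^ p * ⁅x, y⁆⁻¹ ∧ y⁻¹ * ⁅x, y⁆ * y = m ^ q * ⁅x, y⁆⁻¹ := by
  constructor
  · rintro ⟨hx, hy, hxx, hyy⟩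
    exact ⟨hx, hy, (conj_commutatorElement_left_iff hx hy p).mpr hxx.semiconjBy,
      (conj_commutatorElement_right_iff hy q).mpr hyy.semiconjBy⟩
  · rintro ⟨hx, hy, hxs, hys⟩
    exact ⟨hx, hy,
      ⟨(commute_sq_of_semiconjBy_inv hx).symm, (conj_commutatorElement_left_iff hx hy p).mp hxs⟩,
      ⟨(commute_sq_of_semiconjBy_inv hy).symm, (conj_commutatorElement_right_iff hy q).mp hys⟩⟩

lemma forall_torusBundleRelsOdd_iff (φ : TBGen → Γ) :
    (∀ r ∈ torusBundleRelsOdd j k d e f, FreeGroup.lift φ r = 1) ↔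
      φ .s = ⁅φ .a1, φ .a2⁆ ∧
        IsTwistedPair (k - 2 * e) (j + 2 * (f - d * e)) (φ .a1) (φ .a2) (φ .m) := by
  simp only [torusBundleRelsOdd, Set.mem_insert_iff, Set.mem_singleton_iff, forall_eq_or_imp,
    forall_eq, map_mul, map_inv, map_zpow, FreeGroup.lift_apply_of, ← commutatorElement_def,
    map_commutatorElement, commutatorElement_eq_one_iff_commute, ← semiconjBy_self_inv_iff,
    mul_inv_eq_one, isTwistedPair_iff_commutatorElement]
  constructor
  · rintro ⟨-, hs, hx, hxs, hy, hys⟩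
    rw [← hs] at hxs hys
    exact ⟨hs.symm, hx, hy, hxs, hys⟩
  · rintro ⟨hs, hx, hy, hxs, hys⟩
    rw [hs]
    exact ⟨commute_commutatorElement hx hy, rfl, hx, hxs, hy, hys⟩

/-- The determinant condition `ad - b = 1` on the gluing matrix is what leaves exactly `v⁻¹` in
`b₁`. -/
lemma gluing_iff {u v : Γ} (hvu : Commute v u) (hmu : Commute m u) (hmv : Commute m v) :
    u = v ^ a * b₂ * m ^ e ∧ b₁ = v ^ (a * d - 1) * b₂ ^ d * m ^ f ↔
      b₂ = v ^ (-a) * u * m ^ (-e) ∧ b₁ = v ^ (-1 : ℤ) * u ^ d * m ^ (f - d * e) := by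
  have hb₂ : u = v ^ a * b₂ * m ^ e ↔ b₂ = v ^ (-a) * u * m ^ (-e) := by
    rw [zpow_neg, zpow_neg, eq_mul_inv_iff_mul_eq, eq_inv_mul_iff_mul_eq, eq_comm, mul_assoc]
  have hpow : (v ^ (-a) * u * m ^ (-e)) ^ d = v ^ (-a * d) * u ^ d * m ^ (-e * d) := by
    have h : Commute (v ^ (-a) * u) (m ^ (-e)) :=
      ((hmv.zpow_right _).mul_right hmu).symm.zpow_right _
    rw [h.mul_zpow, (hvu.zpow_left _).mul_zpow, zpow_mul, zpow_mul]
  rw [hb₂]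
  refine and_congr_right fun h ↦ ?_
  have hb₁ : v ^ (a * d - 1) * b₂ ^ d * m ^ f = v ^ (-1 : ℤ) * u ^ d * m ^ (f - d * e) := by
    rw [h, hpow]
    group
  rw [hb₁]

lemma isTwistedPair_iff_gluing :
    (SemiconjBy x m m⁻¹ ∧ SemiconjBy y m m⁻¹ ∧ IsConjShift x m j b₁ ∧ IsConjShift y m k b₂ ∧
      x ^ 2 = (y ^ 2) ^ a * b₂ * m ^ e ∧ b₁ = (y ^ 2) ^ (a * d - 1) * b₂ ^ d * m ^ f) ↔
    IsTwistedPair (k - 2 * e) (j + 2 * (f - d * e)) x y m ∧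
      b₂ = (y ^ 2) ^ (-a) * x ^ 2 * m ^ (-e) ∧
      b₁ = (y ^ 2) ^ (-1 : ℤ) * (x ^ 2) ^ d * m ^ (f - d * e) := by
  constructor
  · rintro ⟨hx, hy, hb₁, hb₂, hxx, hglue⟩
    have hsq : IsConjShift y m (k - 2 * e) (x ^ 2) := by
      rw [hxx]
      convert (((isConjShift_sq hy).zpow a).mul hb₂).mul (isConjShift_zpow_self hy e) using 1
      ring
    have hsolved := (gluing_iff (hsq.commute_sq hy) hsq.commute (isConjShift_sq hy).commute).mp
      ⟨hxx, hglue⟩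
    have hyy : y ^ 2 = (x ^ 2) ^ d * m ^ (f - d * e) * b₁⁻¹ := by
      rw [hsolved.2]
      group
    refine ⟨⟨hx, hy, hsq, ?_⟩, hsolved⟩
    rw [hyy]
    convert (((isConjShift_sq hx).zpow d).mul (isConjShift_zpow_self hx (f - d * e))).mul hb₁.inv
      using 1
    ring
  · rintro ⟨⟨hx, hy, hxx, hyy⟩, hb₂, hb₁⟩
    refine ⟨hx, hy, ?_, ?_,
      (gluing_iff (hxx.commute_sq hy) hxx.commute hyy.commute).mpr ⟨hb₂, hb₁⟩⟩
    · rw [hb₁]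
      convert ((hyy.zpow (-1)).mul ((isConjShift_sq hx).zpow d)).mul
        (isConjShift_zpow_self hx (f - d * e)) using 1
      ring
    · rw [hb₂]
      convert (((isConjShift_sq hy).zpow (-a)).mul hxx).mul (isConjShift_zpow_self hy (-e)) using 1
      ring

lemma forall_cOddRels_iff (φ : GlueGen → Γ) :
    (∀ r ∈ cOddRels j k a d e f, FreeGroup.lift φ r = 1) ↔
      IsTwistedPair (k - 2 * e) (j + 2 * (f - d * e)) (φ .a1) (φ .a2) (φ .m) ∧
        φ .b2 = (φ .a2 ^ 2) ^ (-a) * φ .a1 ^ 2 * φ .m ^ (-e) ∧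
        φ .b1 = (φ .a2 ^ 2) ^ (-1 : ℤ) * (φ .a1 ^ 2) ^ d * φ .m ^ (f - d * e) := by
  have hsq (n : ℤ) : φ .a2 ^ (2 * n) = (φ .a2 ^ 2) ^ n := by rw [zpow_mul, zpow_ofNat]
  rw [← isTwistedPair_iff_gluing]
  simp only [cOddRels, Set.mem_insert_iff, Set.mem_singleton_iff, forall_eq_or_imp, forall_eq,
    map_mul, map_inv, map_zpow, map_pow, FreeGroup.lift_apply_of, semiconjBy_self_inv_iff,
    isConjShift_iff, hsq]
  rw [mul_inv_eq_one (a := φ .a1 ^ 2), mul_inv_eq_one (a := φ .b1)]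
  tauto

end Relators

section UniversalProperty

variable {Γ : Type*} [Group Γ] {x y m : Γ} {j k a d e f : ℤ}

lemma lift_presentedGroup_of_eq_one {ι : Type*} {rels : Set (FreeGroup ι)} {r : FreeGroup ι}
    (hr : r ∈ rels) : FreeGroup.lift (PresentedGroup.of : ι → PresentedGroup rels) r = 1 := by
  have h : FreeGroup.lift (PresentedGroup.of : ι → PresentedGroup rels) = PresentedGroup.mk rels :=
    FreeGroup.ext_hom _ _ fun _ ↦ FreeGroup.lift_apply_of
  rw [h, PresentedGroup.one_of_mem hr]

lemma torusBundle_of_s_eq_commutatorElement (j k d e f : ℤ) :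
    PresentedGroup.of TBGen.s =
      ⁅(PresentedGroup.of TBGen.a1 : PresentedGroup (torusBundleRelsOdd j k d e f)),
        (PresentedGroup.of TBGen.a2 : PresentedGroup (torusBundleRelsOdd j k d e f))⁆ :=
  ((forall_torusBundleRelsOdd_iff _).mp fun _ ↦ lift_presentedGroup_of_eq_one).1

lemma isTwistedPair_torusBundle (j k d e f : ℤ) :
    IsTwistedPair (k - 2 * e) (j + 2 * (f - d * e))
      (PresentedGroup.of TBGen.a1 : PresentedGroup (torusBundleRelsOdd j k d e f))
      (PresentedGroup.of TBGen.a2) (PresentedGroup.of TBGen.m) :=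
  ((forall_torusBundleRelsOdd_iff _).mp fun _ ↦ lift_presentedGroup_of_eq_one).2

lemma isTwistedPair_cOdd (j k a d e f : ℤ) :
    IsTwistedPair (k - 2 * e) (j + 2 * (f - d * e))
      (PresentedGroup.of GlueGen.a1 : PresentedGroup (cOddRels j k a d e f))
      (PresentedGroup.of GlueGen.a2) (PresentedGroup.of GlueGen.m) :=
  ((forall_cOddRels_iff _).mp fun _ ↦ lift_presentedGroup_of_eq_one).1

lemma cOdd_of_b2_eq (j k a d e f : ℤ) :
    (PresentedGroup.of GlueGen.b2 : PresentedGroup (cOddRels j k a d e f)) =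
      (PresentedGroup.of GlueGen.a2 ^ 2) ^ (-a) * PresentedGroup.of GlueGen.a1 ^ 2 *
        PresentedGroup.of GlueGen.m ^ (-e) :=
  ((forall_cOddRels_iff _).mp fun _ ↦ lift_presentedGroup_of_eq_one).2.1

lemma cOdd_of_b1_eq (j k a d e f : ℤ) :
    (PresentedGroup.of GlueGen.b1 : PresentedGroup (cOddRels j k a d e f)) =
      (PresentedGroup.of GlueGen.a2 ^ 2) ^ (-1 : ℤ) * (PresentedGroup.of GlueGen.a1 ^ 2) ^ d *
        PresentedGroup.of GlueGen.m ^ (f - d * e) :=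
  ((forall_cOddRels_iff _).mp fun _ ↦ lift_presentedGroup_of_eq_one).2.2

namespace IsTwistedPair

lemma exists_torusBundle_hom (h : IsTwistedPair (k - 2 * e) (j + 2 * (f - d * e)) x y m) :
    ∃ Φ : PresentedGroup (torusBundleRelsOdd j k d e f) →* Γ,
      Φ (.of .a1) = x ∧ Φ (.of .a2) = y ∧ Φ (.of .m) = m := by
  let φ : TBGen → Γ
    | .a1 => x
    | .a2 => y
    | .m => m
    | .s => ⁅x, y⁆
  exact ⟨PresentedGroup.toGroup (f := φ) ((forall_torusBundleRelsOdd_iff φ).mpr ⟨rfl, h⟩),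
    PresentedGroup.toGroup.of _, PresentedGroup.toGroup.of _, PresentedGroup.toGroup.of _⟩

lemma exists_cOdd_hom (h : IsTwistedPair (k - 2 * e) (j + 2 * (f - d * e)) x y m) (a : ℤ) :
    ∃ Φ : PresentedGroup (cOddRels j k a d e f) →* Γ,
      Φ (.of .a1) = x ∧ Φ (.of .a2) = y ∧ Φ (.of .m) = m := by
  let φ : GlueGen → Γ
    | .a1 => x
    | .b1 => (y ^ 2) ^ (-1 : ℤ) * (x ^ 2) ^ d * m ^ (f - d * e)
    | .a2 => y
    | .b2 => (y ^ 2) ^ (-a) * x ^ 2 * m ^ (-e)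
    | .m => m
  exact ⟨PresentedGroup.toGroup (f := φ) ((forall_cOddRels_iff φ).mpr ⟨h, rfl, rfl⟩),
    PresentedGroup.toGroup.of _, PresentedGroup.toGroup.of _, PresentedGroup.toGroup.of _⟩

end IsTwistedPair

lemma torusBundle_hom_ext {Φ Ψ : PresentedGroup (torusBundleRelsOdd j k d e f) →* Γ}
    (hx : Φ (.of .a1) = Ψ (.of .a1)) (hy : Φ (.of .a2) = Ψ (.of .a2))
    (hm : Φ (.of .m) = Ψ (.of .m)) : Φ = Ψ := by
  refine PresentedGroup.ext fun t ↦ ?_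
  cases t
  case s => simp only [torusBundle_of_s_eq_commutatorElement, map_commutatorElement, hx, hy]
  all_goals assumption

lemma cOdd_hom_ext {Φ Ψ : PresentedGroup (cOddRels j k a d e f) →* Γ}
    (hx : Φ (.of .a1) = Ψ (.of .a1)) (hy : Φ (.of .a2) = Ψ (.of .a2))
    (hm : Φ (.of .m) = Ψ (.of .m)) : Φ = Ψ := by
  refine PresentedGroup.ext fun t ↦ ?_
  cases t
  case b1 => simp only [cOdd_of_b1_eq, map_mul, map_zpow, map_pow, hx, hy, hm]
  case b2 => simp only [cOdd_of_b2_eq, map_mul, map_zpow, map_pow, hx, hy, hm]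
  all_goals assumption

end UniversalProperty

theorem cOdd_group_is_torus_bundle_group_general (j k a d e f : ℤ) :
    ∃ θ : PresentedGroup (torusBundleRelsOdd j k d e f)
        ≃* PresentedGroup (cOddRels j k a d e f),
      θ (PresentedGroup.of TBGen.a1) = PresentedGroup.of GlueGen.a1 ∧
      θ (PresentedGroup.of TBGen.a2) = PresentedGroup.of GlueGen.a2 ∧
      θ (PresentedGroup.of TBGen.m) = PresentedGroup.of GlueGen.m ∧
      θ (PresentedGroup.of TBGen.s)
        = PresentedGroup.of GlueGen.a1 * PresentedGroup.of GlueGen.a2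
          * (PresentedGroup.of GlueGen.a1 : PresentedGroup (cOddRels j k a d e f))⁻¹
          * (PresentedGroup.of GlueGen.a2 : PresentedGroup (cOddRels j k a d e f))⁻¹ := by
  obtain ⟨Φ, hΦx, hΦy, hΦm⟩ := (isTwistedPair_cOdd j k a d e f).exists_torusBundle_hom
  obtain ⟨Ψ, hΨx, hΨy, hΨm⟩ := (isTwistedPair_torusBundle j k d e f).exists_cOdd_hom a
  have hΨΦ : Ψ.comp Φ = MonoidHom.id _ :=
    torusBundle_hom_ext (by simp [hΦx, hΨx]) (by simp [hΦy, hΨy]) (by simp [hΦm, hΨm])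
  have hΦΨ : Φ.comp Ψ = MonoidHom.id _ :=
    cOdd_hom_ext (by simp [hΦx, hΨx]) (by simp [hΦy, hΨy]) (by simp [hΦm, hΨm])
  have hΦσ : Φ (.of .s) = ⁅Φ (.of .a1), Φ (.of .a2)⁆ := by
    rw [torusBundle_of_s_eq_commutatorElement, map_commutatorElement]
  rw [hΦx, hΦy] at hΦσ
  exact ⟨Φ.toMulEquiv Ψ hΨΦ hΦΨ, hΦx, hΦy, hΦm, hΦσ⟩

/-- The group (c-odd) of the paper is isomorphic to the fundamental group of the torus
bundle over the torus `M((−1, k−2e; 0, −1), (−1, j+2(f−de); 0, −1); (0, 1))`, via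
`α₁ ↦ α₁`, `α₂ ↦ α₂`, `m ↦ m`, `σ ↦ α₁α₂α₁⁻¹α₂⁻¹`. -/
theorem cOdd_group_is_torus_bundle_group (j k a d e f : ℤ)
    (hj : j = 0 ∨ j = 1) (hk : k = 0 ∨ k = 1) :
    ∃ θ : PresentedGroup (torusBundleRelsOdd j k d e f)
        ≃* PresentedGroup (cOddRels j k a d e f),
      θ (PresentedGroup.of TBGen.a1) = PresentedGroup.of GlueGen.a1 ∧
      θ (PresentedGroup.of TBGen.a2) = PresentedGroup.of GlueGen.a2 ∧
      θ (PresentedGroup.of TBGen.m) = PresentedGroup.of GlueGen.m ∧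
      θ (PresentedGroup.of TBGen.s)
        = PresentedGroup.of GlueGen.a1 * PresentedGroup.of GlueGen.a2
          * (PresentedGroup.of GlueGen.a1 : PresentedGroup (cOddRels j k a d e f))⁻¹
          * (PresentedGroup.of GlueGen.a2 : PresentedGroup (cOddRels j k a d e f))⁻¹ :=
  cOdd_group_is_torus_bundle_group_general j k a d e f
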